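/- arXiv:math/9803047 — 3 statements merged into one kernel-verified Lean document; each statement's English description precedes it below -/
import Mathlib

section
/- Let r ≥ 1 and let M be an r×r real symmetric matrix that is negative definite and satisfies M i j ≥ 0 for all i ≠ j (so M i i < 0 for all i). Let c ∈ ℝ^r satisfy c i ≥ 0 for all i, and let m = M⁻¹ c. Then -mᵀ M m ≥ Σ_{i=1}^{r} (c i)² / (-M i i). -/
open Matrix

section NegativeDefinite

variable {ι : Type*} [Fintype ι] {M : Matrix ι ι ℝ}

lemma diag_neg_of_neg_def [DecidableEq ι]
    (hM : ∀ x : ι → ℝ, x ≠ 0 → x ⬝ᵥ (M *ᵥ x) < 0) (i : ι) : M i i < 0 := by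
  simpa using hM (Pi.single i 1) (by simp)

lemma isUnit_det_of_neg_def [DecidableEq ι]
    (hM : ∀ x : ι → ℝ, x ≠ 0 → x ⬝ᵥ (M *ᵥ x) < 0) : IsUnit M.det := by
  rw [isUnit_iff_ne_zero]
  intro hdet
  obtain ⟨v, hv, hMv⟩ := Matrix.exists_mulVec_eq_zero_iff.mpr hdet
  simpa [hMv] using hM v hv

/-- A negative definite matrix with nonnegative off-diagonal entries has an inverse with
nonpositive entries, in the form of a minimum principle. -/
lemma nonpos_of_mulVec_nonneg
    (hM : ∀ x : ι → ℝ, x ≠ 0 → x ⬝ᵥ (M *ᵥ x) < 0)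
    (hoff : ∀ i j, i ≠ j → 0 ≤ M i j) {m : ι → ℝ} (hm : ∀ i, 0 ≤ (M *ᵥ m) i) (i : ι) :
    m i ≤ 0 := by
  have hpos : 0 ≤ m⁺ ⬝ᵥ (M *ᵥ m) :=
    Finset.sum_nonneg fun j _ => mul_nonneg (posPart_nonneg m j) (hm j)
  have hcross : 0 ≤ m⁺ ⬝ᵥ (M *ᵥ m⁻) := by
    refine Finset.sum_nonneg fun j _ => ?_
    rw [Matrix.mulVec, dotProduct, Finset.mul_sum]
    refine Finset.sum_nonneg fun k _ => ?_
    rcases eq_or_ne j k with rfl | hjk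
    · have hzero : m⁺ j * m⁻ j = 0 := by
        rw [Pi.posPart_apply, Pi.negPart_apply]
        rcases le_total (m j) 0 with h | h
        · simp [posPart_eq_zero.mpr h]
        · simp [negPart_eq_zero.mpr h]
      rw [mul_left_comm, hzero, mul_zero]
    · exact mul_nonneg (posPart_nonneg m j) (mul_nonneg (hoff j k hjk) (negPart_nonneg m k))
  have hsplit : m⁺ ⬝ᵥ (M *ᵥ m) = m⁺ ⬝ᵥ (M *ᵥ m⁺) - m⁺ ⬝ᵥ (M *ᵥ m⁻) := by
    rw [← dotProduct_sub, ← Matrix.mulVec_sub, posPart_sub_negPart]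
  have hzero : m⁺ = 0 := by
    by_contra h
    linarith [hM _ h]
  exact posPart_eq_zero.mp hzero i

end NegativeDefinite

/-- **Lemma 1.3 (matrix form).** If `M` is a symmetric negative definite real matrix with
nonnegative off-diagonal entries, `c` has nonnegative entries and `m = M⁻¹ c`, then
`-mᵀ M m ≥ Σᵢ (c i)² / (-M i i)`. -/
theorem neg_quadratic_ge_sum (r : ℕ) (hr : 1 ≤ r)
    (M : Matrix (Fin r) (Fin r) ℝ) (hsymm : M.IsSymm)
    (hnegdef : ∀ x : Fin r → ℝ, x ≠ 0 → x ⬝ᵥ (M *ᵥ x) < 0)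
    (hoffdiag : ∀ i j : Fin r, i ≠ j → 0 ≤ M i j)
    (c : Fin r → ℝ) (hc : ∀ i, 0 ≤ c i)
    (m : Fin r → ℝ) (hm : m = M⁻¹ *ᵥ c) :
    ∑ i : Fin r, (c i) ^ 2 / (- M i i) ≤ - (m ⬝ᵥ (M *ᵥ m)) := by
  have hMm : M *ᵥ m = c := by
    rw [hm, Matrix.mulVec_mulVec, Matrix.mul_nonsing_inv _ (isUnit_det_of_neg_def hnegdef),
      Matrix.one_mulVec]
  have hm_nonpos : ∀ i, m i ≤ 0 :=
    nonpos_of_mulVec_nonneg hnegdef hoffdiag (by simpa [hMm] using hc)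
  rw [hMm, dotProduct, ← Finset.sum_neg_distrib]
  refine Finset.sum_le_sum fun i _ => ?_
  have hdiag := diag_neg_of_neg_def hnegdef i
  have hle : c i ≤ M i i * m i := by
    rw [← hMm, Matrix.mulVec, dotProduct, ← Finset.add_sum_erase _ _ (Finset.mem_univ i)]
    exact add_le_of_nonpos_right <| Finset.sum_nonpos fun j hj =>
      mul_nonpos_of_nonneg_of_nonpos (hoffdiag i j (Finset.ne_of_mem_erase hj).symm) (hm_nonpos j)
  rw [div_le_iff₀ (neg_pos.mpr hdiag)]
  nlinarith [mul_le_mul_of_nonneg_left hle (hc i)]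
end

section
/- No real number α is an accumulation point of S from above; that is, for every α ∈ ℝ there exists ε > 0 such that no s ∈ S satisfies α < s < α + ε. Equivalently, there is no strictly decreasing sequence of elements of S. -/
open Matrix

structure ResolutionDatum (r : ℕ) where
  M : Matrix (Fin r) (Fin r) ℤ
  p : Fin r → ℕ
  symm : M.IsSymm
  negdef : ∀ x : Fin r → ℝ, x ≠ 0 → x ⬝ᵥ ((M.map (Int.cast : ℤ → ℝ)) *ᵥ x) < 0
  offdiag_nonneg : ∀ i j : Fin r, i ≠ j → 0 ≤ M i j
  diag_le_neg_two : ∀ i : Fin r, p i = 0 → M i i ≤ -2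
  connected : (SimpleGraph.fromRel (fun i j : Fin r => 0 < M i j)).Connected

/-- The vector `c i = 2 p i - 2 - M i i` (the values `K · A_i`). -/
def ResolutionDatum.c {r : ℕ} (D : ResolutionDatum r) : Fin r → ℚ :=
  fun i => 2 * (D.p i : ℚ) - 2 - (D.M i i : ℚ)

/-- `-K² = -cᵀ M⁻¹ c`. -/
noncomputable def ResolutionDatum.negK2 {r : ℕ} (D : ResolutionDatum r) : ℚ :=
  - (D.c ⬝ᵥ ((D.M.map (Int.cast : ℤ → ℚ))⁻¹ *ᵥ D.c))

/-- The set of all values `-K²` of normal surface singularities. -/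
def negK2Set : Set ℝ :=
  { x : ℝ | ∃ (r : ℕ) (_ : 0 < r) (D : ResolutionDatum r), x = (D.negK2 : ℝ) }

section LengthGraph

variable {V : Type*}

/-- Dirichlet energy of a potential `x` on a multigraph whose edges `(u, v, ℓ)` have length `ℓ`. -/
noncomputable def edgeEnergy (E : Multiset (V × V × ℕ)) (x : V → ℝ) : ℝ :=
  (E.map fun e => (x e.1 - x e.2.1) ^ 2 / (e.2.2 : ℝ)).sum

/-- Number of edge ends at `v`, a loop counting twice. -/
def edgeEnds [DecidableEq V] (E : Multiset (V × V × ℕ)) (v : V) : ℕ :=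
  (E.map fun e => (if e.1 = v then 1 else 0) + (if e.2.1 = v then 1 else 0)).sum

/-- The concave functional `2 c·x - ∑ d i (x i)² - energy`. -/
noncomputable def objective (c d : V → ℤ) (S : Finset V) (E : Multiset (V × V × ℕ))
    (x : V → ℝ) : ℝ :=
  ∑ i ∈ S, (2 * (c i : ℝ) * x i - (d i : ℝ) * x i ^ 2) - edgeEnergy E x

/-- A multigraph on `S` with vertex valencies `deg` whose functional has maximal value `s`. -/
structure IsReduction [DecidableEq V] (c d : V → ℤ) (deg : V → ℕ) (s : ℝ) (S : Finset V)
    (E : Multiset (V × V × ℕ)) : Prop where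
  mem : ∀ e ∈ E, e.1 ∈ S ∧ e.2.1 ∈ S ∧ 0 < e.2.2
  ends_eq : ∀ v ∈ S, edgeEnds E v = deg v
  greatest : IsGreatest (Set.range (objective c d S E)) s

theorem edgeEnergy_cons (e : V × V × ℕ) (E : Multiset (V × V × ℕ)) (x : V → ℝ) :
    edgeEnergy (e ::ₘ E) x = (x e.1 - x e.2.1) ^ 2 / (e.2.2 : ℝ) + edgeEnergy E x := by
  simp [edgeEnergy]

theorem edgeEnds_cons [DecidableEq V] (e : V × V × ℕ) (E : Multiset (V × V × ℕ)) (v : V) :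
    edgeEnds (e ::ₘ E) v =
      (if e.1 = v then 1 else 0) + (if e.2.1 = v then 1 else 0) + edgeEnds E v := by
  simp [edgeEnds]

theorem ne_of_edgeEnds_eq_zero [DecidableEq V] {E : Multiset (V × V × ℕ)} {v : V}
    (h : edgeEnds E v = 0) : ∀ e ∈ E, e.1 ≠ v ∧ e.2.1 ≠ v := by
  intro e he
  obtain ⟨E', rfl⟩ := Multiset.exists_cons_of_mem he
  rw [edgeEnds_cons] at h
  constructor <;> rintro rfl <;> simp at h

theorem edgeEnergy_congr {E : Multiset (V × V × ℕ)} {x y : V → ℝ}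
    (h : ∀ e ∈ E, x e.1 = y e.1 ∧ x e.2.1 = y e.2.1) : edgeEnergy E x = edgeEnergy E y := by
  unfold edgeEnergy
  congr 1
  refine Multiset.map_congr rfl fun e he => ?_
  rw [(h e he).1, (h e he).2]

theorem sum_edgeEnds [DecidableEq V] {E : Multiset (V × V × ℕ)} {S : Finset V}
    (h : ∀ e ∈ E, e.1 ∈ S ∧ e.2.1 ∈ S) : ∑ v ∈ S, edgeEnds E v = 2 * E.card := by
  induction E using Multiset.induction_on with
  | empty => simp [edgeEnds]
  | cons e E ih =>
    have he := h e (Multiset.mem_cons_self e E)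
    have := ih fun e' he' => h e' (Multiset.mem_cons_of_mem he')
    simp only [edgeEnds_cons, Finset.sum_add_distrib, Finset.sum_ite_eq, he.1, he.2, if_true, this,
      Multiset.card_cons]
    ring

variable [DecidableEq V] {c d : V → ℤ} {deg : V → ℕ} {s : ℝ} {S : Finset V}

theorem IsReduction.flip {u v : V} {l : ℕ} {E : Multiset (V × V × ℕ)}
    (h : IsReduction c d deg s S ((u, v, l) ::ₘ E)) :
    IsReduction c d deg s S ((v, u, l) ::ₘ E) where
  mem := by
    have := h.mem
    simp only [Multiset.mem_cons, forall_eq_or_imp] at this ⊢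
    exact ⟨⟨this.1.2.1, this.1.1, this.1.2.2⟩, this.2⟩
  ends_eq w hw := by
    rw [← h.ends_eq w hw, edgeEnds_cons, edgeEnds_cons]
    ring
  greatest := by
    have : objective c d S ((v, u, l) ::ₘ E) = objective c d S ((u, v, l) ::ₘ E) := by
      funext x
      simp only [objective, edgeEnergy_cons]
      ring
    rw [this]
    exact h.greatest

theorem IsReduction.exists_cons {v : V} {F E : Multiset (V × V × ℕ)}
    (h : IsReduction c d deg s S (F + E)) (hv : edgeEnds E v ≠ 0) :
    ∃ u l E', IsReduction c d deg s S (F + (v, u, l) ::ₘ E') := by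
  obtain ⟨e, he, hev⟩ : ∃ e ∈ E, e.1 = v ∨ e.2.1 = v := by
    by_contra! hcon
    refine hv (Multiset.sum_eq_zero fun n hn => ?_)
    obtain ⟨e, he, rfl⟩ := Multiset.mem_map.1 hn
    simp [hcon e he]
  obtain ⟨E', rfl⟩ := Multiset.exists_cons_of_mem he
  obtain ⟨a, b, l⟩ := e
  rcases hev with rfl | rfl
  · exact ⟨b, l, E', h⟩
  · refine ⟨a, l, E', ?_⟩
    rw [Multiset.add_cons] at h ⊢
    exact h.flip

theorem sq_sub_div_add_le (a b y : ℝ) {l m : ℝ} (hl : 0 < l) (hm : 0 < m) :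
    (a - b) ^ 2 / (l + m) ≤ (y - a) ^ 2 / l + (y - b) ^ 2 / m := by
  rw [div_add_div _ _ hl.ne' hm.ne', div_le_div_iff₀ (by positivity) (by positivity)]
  nlinarith [sq_nonneg ((y - a) * m + (y - b) * l)]

/-- Suppressing a valency-two vertex on which the functional has no local terms. -/
theorem IsReduction.exists_erase {v : V} {E : Multiset (V × V × ℕ)}
    (h : IsReduction c d deg s S E) (hv : v ∈ S) (hc : c v = 0) (hd : d v = 0)
    (hdeg : deg v = 2) : ∃ E', IsReduction c d deg s (S.erase v) E' := by
  have hsum : ∀ x : V → ℝ, ∑ i ∈ S, (2 * (c i : ℝ) * x i - (d i : ℝ) * x i ^ 2) =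
      ∑ i ∈ S.erase v, (2 * (c i : ℝ) * x i - (d i : ℝ) * x i ^ 2) := fun x => by
    rw [← Finset.add_sum_erase _ _ hv]
    simp [hc, hd]
  obtain ⟨u, l, E₁, h₁⟩ := IsReduction.exists_cons (F := 0) (v := v) (by simpa using h)
    (by rw [h.ends_eq v hv, hdeg]; norm_num)
  rw [zero_add] at h₁
  have hends := h₁.ends_eq v hv
  rw [edgeEnds_cons, hdeg] at hends
  by_cases huv : u = v
  · subst huv
    have hz := ne_of_edgeEnds_eq_zero (E := E₁) (v := u) (by simp at hends; exact hends)
    refine ⟨E₁, fun e he => ?_, fun w hw => ?_, ?_⟩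
    · have := h₁.mem e (Multiset.mem_cons_of_mem he)
      exact ⟨Finset.mem_erase.2 ⟨(hz e he).1, this.1⟩,
        Finset.mem_erase.2 ⟨(hz e he).2, this.2.1⟩, this.2.2⟩
    · rw [← h₁.ends_eq w (Finset.mem_of_mem_erase hw), edgeEnds_cons]
      simp [(Finset.ne_of_mem_erase hw).symm]
    · convert h₁.greatest using 2
      funext x
      simp [objective, edgeEnergy_cons, hsum]
  obtain ⟨u', l', E₂, h₂⟩ := IsReduction.exists_cons (F := {(v, u, l)}) (v := v) (E := E₁)
    (by simpa using h₁) (by simp [huv] at hends; omega)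
  rw [Multiset.singleton_add] at h₂
  have hends₂ := h₂.ends_eq v hv
  rw [edgeEnds_cons, edgeEnds_cons, hdeg] at hends₂
  have huv' : u' ≠ v := by
    rintro rfl
    simp at hends₂
    omega
  have hz := ne_of_edgeEnds_eq_zero (E := E₂) (v := v) (by simp [huv, huv'] at hends₂; omega)
  have hm := h₂.mem
  simp only [Multiset.mem_cons, forall_eq_or_imp] at hm
  obtain ⟨⟨-, hu, hl⟩, ⟨-, hu', hl'⟩, hm⟩ := hm
  have hlR : (0 : ℝ) < l := by exact_mod_cast hl
  have hlR' : (0 : ℝ) < l' := by exact_mod_cast hl'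
  refine ⟨(u, u', l + l') ::ₘ E₂, ?_, fun w hw => ?_, ?_⟩
  · simp only [Multiset.mem_cons, forall_eq_or_imp]
    refine ⟨⟨Finset.mem_erase.2 ⟨huv, hu⟩, Finset.mem_erase.2 ⟨huv', hu'⟩, by omega⟩,
      fun e he => ?_⟩
    exact ⟨Finset.mem_erase.2 ⟨(hz e he).1, (hm e he).1⟩,
      Finset.mem_erase.2 ⟨(hz e he).2, (hm e he).2.1⟩, (hm e he).2.2⟩
  · rw [← h₂.ends_eq w (Finset.mem_of_mem_erase hw), edgeEnds_cons, edgeEnds_cons, edgeEnds_cons]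
    simp only [(Finset.ne_of_mem_erase hw).symm, if_false]
    ring
  · have hle : ∀ x, objective c d S ((v, u, l) ::ₘ (v, u', l') ::ₘ E₂) x ≤
        objective c d (S.erase v) ((u, u', l + l') ::ₘ E₂) x := fun x => by
      have := sq_sub_div_add_le (x u) (x u') (x v) hlR hlR'
      simp only [objective, edgeEnergy_cons, hsum, Nat.cast_add]
      linarith
    have hex : ∀ x, ∃ y, objective c d (S.erase v) ((u, u', l + l') ::ₘ E₂) x =
        objective c d S ((v, u, l) ::ₘ (v, u', l') ::ₘ E₂) y := fun x => by
      refine ⟨Function.update x v ((l' * x u + l * x u') / (l + l')), ?_⟩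
      have hE : edgeEnergy E₂ (Function.update x v ((l' * x u + l * x u') / (l + l'))) =
          edgeEnergy E₂ x :=
        edgeEnergy_congr fun e he => by simp [(hz e he).1, (hz e he).2]
      have hS : ∑ i ∈ S.erase v, (2 * (c i : ℝ) *
          Function.update x v ((l' * x u + l * x u') / (l + l')) i - (d i : ℝ) *
          Function.update x v ((l' * x u + l * x u') / (l + l')) i ^ 2) =
          ∑ i ∈ S.erase v, (2 * (c i : ℝ) * x i - (d i : ℝ) * x i ^ 2) :=
        Finset.sum_congr rfl fun i hi => by
          rw [Function.update_of_ne (Finset.ne_of_mem_erase hi)]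
      simp only [objective, edgeEnergy_cons, hsum, hE, hS, Function.update_self,
        Function.update_of_ne huv, Function.update_of_ne huv', Nat.cast_add]
      field_simp
      ring
    obtain ⟨⟨x₀, hx₀⟩, hub⟩ := h₂.greatest
    have hub' : ∀ x, objective c d (S.erase v) ((u, u', l + l') ::ₘ E₂) x ≤ s := fun x => by
      obtain ⟨y, hy⟩ := hex x
      exact hy ▸ hub ⟨y, rfl⟩
    refine ⟨⟨x₀, le_antisymm (hub' x₀) (hx₀ ▸ hle x₀)⟩, ?_⟩
    rintro _ ⟨x, rfl⟩
    exact hub' x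

theorem IsReduction.exists_subset_special {E : Multiset (V × V × ℕ)}
    (h : IsReduction c d deg s S E) (hd : ∀ v, c v = 0 → deg v = 2 → d v = 0) :
    ∃ S' E', IsReduction c d deg s S' E' ∧ ∀ v ∈ S', c v ≠ 0 ∨ deg v ≠ 2 := by
  induction hn : S.card using Nat.strong_induction_on generalizing S E with
  | _ n ih =>
    by_cases hS : ∀ v ∈ S, c v ≠ 0 ∨ deg v ≠ 2
    · exact ⟨S, E, h, hS⟩
    push Not at hS
    obtain ⟨v, hv, hcv, hdv⟩ := hS
    obtain ⟨E', h'⟩ := h.exists_erase hv hcv (hd v hcv hdv) hdv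
    exact ih _ (hn ▸ Finset.card_erase_lt_of_mem hv) h' rfl

end LengthGraph

section Models

/-- Maximal values of the functional on an index set `Fin k` with `m` edges of fixed endpoints and
arbitrary positive lengths. -/
def modelValues {k m : ℕ} (c d : Fin k → ℤ) (ends : Fin m → Fin k × Fin k) : Set ℝ :=
  {s | ∃ l : Fin m → ℕ, (∀ e, 0 < l e) ∧ IsGreatest (Set.range fun x : Fin k → ℝ =>
    ∑ i, (2 * (c i : ℝ) * x i - (d i : ℝ) * x i ^ 2) -
      ∑ e, (x (ends e).1 - x (ends e).2) ^ 2 / (l e : ℝ)) s}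

theorem isPWO_modelValues {k m : ℕ} (c d : Fin k → ℤ) (ends : Fin m → Fin k × Fin k) :
    (modelValues c d ends).IsPWO := by
  rw [Set.IsPWO, Set.partiallyWellOrderedOn_iff_exists_lt]
  intro f hf
  choose l hl hmax using hf
  obtain ⟨i, j, hij, hle⟩ := wellQuasiOrdered_le l
  refine ⟨i, j, hij, ?_⟩
  obtain ⟨x, hx⟩ := (hmax i).1
  refine le_trans ?_ ((hmax j).2 ⟨x, rfl⟩)
  rw [← hx]
  refine sub_le_sub_left (Finset.sum_le_sum fun e _ => ?_) _
  have h0 : (0 : ℝ) < l i e := by exact_mod_cast hl i e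
  have h1 : (l i e : ℝ) ≤ l j e := by exact_mod_cast hle e
  gcongr

theorem IsReduction.exists_mem_modelValues {V : Type*} [DecidableEq V] {c d : V → ℤ}
    {deg : V → ℕ} {s : ℝ} {S : Finset V} {E : Multiset (V × V × ℕ)}
    (h : IsReduction c d deg s S E) :
    ∃ (v : Fin S.card → V) (ends : Fin E.card → Fin S.card × Fin S.card),
      s ∈ modelValues (c ∘ v) (d ∘ v) ends := by
  obtain ⟨L, rfl⟩ := Quot.exists_rep E
  change IsReduction c d deg s S (L : Multiset (V × V × ℕ)) at h
  let σ := S.equivFin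
  have hm : ∀ e : Fin L.length, (L.get e).1 ∈ S ∧ (L.get e).2.1 ∈ S ∧ 0 < (L.get e).2.2 :=
    fun e => h.mem _ (Multiset.mem_coe.2 (L.get_mem e))
  refine ⟨fun i => (σ.symm i : V), fun e => (σ ⟨_, (hm e).1⟩, σ ⟨_, (hm e).2.1⟩),
    fun e => (L.get e).2.2, fun e => (hm e).2.2, ?_⟩
  have key : ∀ x : V → ℝ, objective c d S (L : Multiset (V × V × ℕ)) x =
      ∑ i, (2 * (c (σ.symm i) : ℝ) * x (σ.symm i) - (d (σ.symm i) : ℝ) * x (σ.symm i) ^ 2) -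
      ∑ e : Fin L.length, (x (L.get e).1 - x (L.get e).2.1) ^ 2 / ((L.get e).2.2 : ℝ) := by
    intro x
    unfold objective edgeEnergy
    congr 1
    · rw [← Finset.sum_coe_sort S, ← σ.symm.sum_comp]
    · rw [Multiset.map_coe, Multiset.sum_coe, ← Fin.sum_univ_fun_getElem]
      rfl
  convert h.greatest using 1
  ext t
  constructor
  · rintro ⟨y, rfl⟩
    refine ⟨fun i => if hi : i ∈ S then y (σ ⟨i, hi⟩) else 0, ?_⟩
    rw [key]
    congr 1
    · simp
    · exact Finset.sum_congr rfl fun e _ => by rw [dif_pos (hm e).1, dif_pos (hm e).2.1]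
  · rintro ⟨x, rfl⟩
    refine ⟨fun i => x (σ.symm i), ?_⟩
    rw [key]
    simp only [Equiv.symm_apply_apply]
    rfl

end Models

namespace ResolutionDatum

variable {r : ℕ} (D : ResolutionDatum r)

/-- The integer vector `K · A_i`. -/
def excess (i : Fin r) : ℤ := 2 * (D.p i : ℤ) - 2 - D.M i i

/-- The coefficient of `x i ^ 2` once the form is written as a weighted Laplacian. -/
def rowDefect (i : Fin r) : ℤ := -∑ j, D.M i j

/-- The number of edge ends at `i`, with multiplicity. -/
def valency (i : Fin r) : ℕ := ∑ j, if j = i then 0 else (D.M i j).toNat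

theorem valency_cast (i : Fin r) : (D.valency i : ℤ) = ∑ j, D.M i j - D.M i i := by
  rw [← Finset.add_sum_erase _ _ (Finset.mem_univ i), add_sub_cancel_left, valency,
    ← Finset.add_sum_erase _ _ (Finset.mem_univ i), if_pos rfl, zero_add, Nat.cast_sum]
  refine Finset.sum_congr rfl fun j hj => ?_
  have hne := Finset.ne_of_mem_erase hj
  rw [if_neg hne, Int.toNat_of_nonneg (D.offdiag_nonneg i j hne.symm)]

theorem rowDefect_eq (i : Fin r) : D.rowDefect i = -D.M i i - D.valency i := by
  rw [valency_cast, rowDefect]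
  ring

theorem form_eq_sum (x : Fin r → ℝ) :
    x ⬝ᵥ ((D.M.map (Int.cast : ℤ → ℝ)) *ᵥ x) = ∑ i, ∑ j, (D.M i j : ℝ) * x i * x j := by
  simp only [dotProduct, mulVec, Matrix.map_apply, Finset.mul_sum]
  exact Finset.sum_congr rfl fun i _ => Finset.sum_congr rfl fun j _ => by ring

theorem form_eq_laplacian (x : Fin r → ℝ) :
    x ⬝ᵥ ((D.M.map (Int.cast : ℤ → ℝ)) *ᵥ x) =
      -∑ i, (D.rowDefect i : ℝ) * x i ^ 2 - (∑ i, ∑ j, (D.M i j : ℝ) * (x i - x j) ^ 2) / 2 := by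
  have hsymm : ∑ i, ∑ j, (D.M i j : ℝ) * x j ^ 2 = ∑ i, ∑ j, (D.M i j : ℝ) * x i ^ 2 := by
    rw [Finset.sum_comm]
    exact Finset.sum_congr rfl fun i _ => Finset.sum_congr rfl fun j _ => by
      rw [D.symm.apply]
  have hexp : ∑ i, ∑ j, (D.M i j : ℝ) * (x i - x j) ^ 2 =
      ∑ i, ∑ j, (D.M i j : ℝ) * x i ^ 2 + ∑ i, ∑ j, (D.M i j : ℝ) * x j ^ 2 -
        2 * ∑ i, ∑ j, (D.M i j : ℝ) * x i * x j := by
    simp only [Finset.mul_sum, ← Finset.sum_add_distrib, ← Finset.sum_sub_distrib]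
    exact Finset.sum_congr rfl fun i _ => Finset.sum_congr rfl fun j _ => by ring
  have hrow : -∑ i, (D.rowDefect i : ℝ) * x i ^ 2 = ∑ i, ∑ j, (D.M i j : ℝ) * x i ^ 2 := by
    rw [← Finset.sum_neg_distrib]
    refine Finset.sum_congr rfl fun i _ => ?_
    rw [rowDefect, ← Finset.sum_mul]
    push_cast
    ring
  rw [form_eq_sum, hrow, hexp, hsymm]
  ring

theorem diag_neg (i : Fin r) : D.M i i < 0 := by
  have h := D.negdef (Pi.single i 1) (by simp)
  simp only [single_dotProduct, mulVec_single] at h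
  simpa using h

theorem diag_add_two_le_excess (i : Fin r) : -D.M i i - 2 ≤ D.excess i := by
  have : (0 : ℤ) ≤ D.p i := by positivity
  unfold excess
  linarith

theorem diag_le_excess_of_pos {i : Fin r} (hp : D.p i ≠ 0) : -D.M i i ≤ D.excess i := by
  unfold excess
  omega

theorem excess_nonneg (i : Fin r) : 0 ≤ D.excess i := by
  by_cases hp : D.p i = 0
  · have := D.diag_le_neg_two i hp
    have := D.diag_add_two_le_excess i
    linarith
  · have := D.diag_le_excess_of_pos hp
    have := D.diag_neg i
    linarith

theorem diag_eq_of_excess_eq_zero {i : Fin r} (h : D.excess i = 0) : D.M i i = -2 := by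
  by_cases hp : D.p i = 0
  · unfold excess at h
    rw [hp] at h
    push_cast at h
    linarith
  · have := D.diag_le_excess_of_pos hp
    have := D.diag_neg i
    linarith

theorem diag_le_three_mul_excess {i : Fin r} (h : D.excess i ≠ 0) :
    -D.M i i ≤ 3 * D.excess i := by
  have := D.excess_nonneg i
  have := D.diag_add_two_le_excess i
  omega

theorem isUnit_det : IsUnit (D.M.map (Int.cast : ℤ → ℚ)).det := by
  rw [isUnit_iff_ne_zero]
  intro hdet
  have hdet' : (D.M.map (Int.cast : ℤ → ℝ)).det = 0 := by
    have h1 : (D.M.map (Int.cast : ℤ → ℚ)).det = ((D.M.det : ℤ) : ℚ) :=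
      ((Int.castRingHom ℚ).map_det D.M).symm
    have h2 : (D.M.map (Int.cast : ℤ → ℝ)).det = ((D.M.det : ℤ) : ℝ) :=
      ((Int.castRingHom ℝ).map_det D.M).symm
    rw [h1, Int.cast_eq_zero] at hdet
    rw [h2, hdet, Int.cast_zero]
  obtain ⟨x, hx, hx0⟩ := Matrix.exists_mulVec_eq_zero_iff.2 hdet'
  have := D.negdef x hx
  simp [hx0] at this

theorem exists_canonical_vector : ∃ z : Fin r → ℝ,
    (∀ i, ∑ j, (D.M i j : ℝ) * z j = -(D.excess i : ℝ)) ∧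
      (D.negK2 : ℝ) = ∑ i, (D.excess i : ℝ) * z i := by
  set w : Fin r → ℚ := (D.M.map (Int.cast : ℤ → ℚ))⁻¹ *ᵥ D.c with hw
  have hMw : (D.M.map (Int.cast : ℤ → ℚ)) *ᵥ w = D.c := by
    rw [hw, mulVec_mulVec, mul_nonsing_inv _ D.isUnit_det, one_mulVec]
  have hc : ∀ i, D.c i = (D.excess i : ℚ) := fun i => by simp [c, excess]
  refine ⟨fun i => -(w i : ℝ), fun i => ?_, ?_⟩
  · have h := congrFun hMw i
    rw [hc] at h
    simp only [mulVec, dotProduct, Matrix.map_apply] at h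
    have h' := congrArg (Rat.cast : ℚ → ℝ) h
    push_cast at h'
    simp only [mul_neg, Finset.sum_neg_distrib, h']
  · rw [negK2, ← hw]
    simp only [dotProduct, hc]
    push_cast
    simp

theorem isGreatest_negK2 :
    IsGreatest (Set.range fun x : Fin r → ℝ =>
      ∑ i, 2 * (D.excess i : ℝ) * x i + x ⬝ᵥ ((D.M.map (Int.cast : ℤ → ℝ)) *ᵥ x))
      (D.negK2 : ℝ) := by
  obtain ⟨z, hz, hs⟩ := D.exists_canonical_vector
  have hMz : ∀ x : Fin r → ℝ, ∑ i, ∑ j, (D.M i j : ℝ) * x i * z j =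
      -∑ i, (D.excess i : ℝ) * x i := fun x => by
    rw [← Finset.sum_neg_distrib]
    refine Finset.sum_congr rfl fun i _ => ?_
    rw [← neg_mul, ← hz i, Finset.sum_mul]
    exact Finset.sum_congr rfl fun j _ => by ring
  have hMz' : ∀ x : Fin r → ℝ, ∑ i, ∑ j, (D.M i j : ℝ) * z i * x j =
      -∑ i, (D.excess i : ℝ) * x i := fun x => by
    rw [← hMz, Finset.sum_comm]
    refine Finset.sum_congr rfl fun i _ => Finset.sum_congr rfl fun j _ => ?_
    rw [D.symm.apply]
    ring
  have hlin : ∀ x : Fin r → ℝ, ∑ i, 2 * (D.excess i : ℝ) * x i =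
      2 * ∑ i, (D.excess i : ℝ) * x i := fun x => by
    rw [Finset.mul_sum]
    exact Finset.sum_congr rfl fun i _ => by ring
  constructor
  · refine ⟨z, ?_⟩
    simp only [form_eq_sum, hMz, hlin, hs]
    ring
  · rintro _ ⟨x, rfl⟩
    have hle : (x - z) ⬝ᵥ ((D.M.map (Int.cast : ℤ → ℝ)) *ᵥ (x - z)) ≤ 0 := by
      by_cases h : x - z = 0
      · simp [h]
      · exact (D.negdef _ h).le
    have hexp : ∑ i, ∑ j, (D.M i j : ℝ) * (x - z) i * (x - z) j =
        ∑ i, ∑ j, (D.M i j : ℝ) * x i * x j - ∑ i, ∑ j, (D.M i j : ℝ) * x i * z j -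
          ∑ i, ∑ j, (D.M i j : ℝ) * z i * x j + ∑ i, ∑ j, (D.M i j : ℝ) * z i * z j := by
      simp only [← Finset.sum_add_distrib, ← Finset.sum_sub_distrib, Pi.sub_apply]
      exact Finset.sum_congr rfl fun i _ => Finset.sum_congr rfl fun j _ => by ring
    rw [form_eq_sum, hexp, hMz, hMz', hMz] at hle
    simp only [form_eq_sum, hlin, hs]
    linarith

theorem sum_excess_le : ((∑ i, D.excess i : ℤ) : ℝ) ≤ 3 * (D.negK2 : ℝ) := by
  let x : Fin r → ℝ := fun i => if D.excess i = 0 then 0 else 1 / 3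
  have hx : ∀ i, 0 ≤ x i := fun i => by
    dsimp only [x]
    split_ifs <;> norm_num
  have hub := D.isGreatest_negK2.2 ⟨x, rfl⟩
  simp only [form_eq_sum, ← Finset.sum_add_distrib] at hub
  suffices h : ∑ i, (D.excess i : ℝ) / 3 ≤
      ∑ i, (2 * (D.excess i : ℝ) * x i + ∑ j, (D.M i j : ℝ) * x i * x j) by
    rw [← Finset.sum_div] at h
    push_cast
    linarith
  refine Finset.sum_le_sum fun i _ => ?_
  have hdiag : (D.M i i : ℝ) * x i * x i ≤ ∑ j, (D.M i j : ℝ) * x i * x j := by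
    rw [← Finset.add_sum_erase _ _ (Finset.mem_univ i)]
    refine le_add_of_nonneg_right (Finset.sum_nonneg fun j hj => ?_)
    have : (0 : ℝ) ≤ D.M i j := by
      exact_mod_cast D.offdiag_nonneg i j (Finset.ne_of_mem_erase hj).symm
    have := hx i
    have := hx j
    positivity
  refine le_trans ?_ (add_le_add_right hdiag _)
  by_cases h : D.excess i = 0
  · simp [x, h]
  · have h3 : (-D.M i i : ℝ) ≤ 3 * D.excess i := by exact_mod_cast D.diag_le_three_mul_excess h
    simp only [x, if_neg h]
    linarith

theorem two_mul_card_sub_le_sum_valency : 2 * (r : ℤ) - 2 ≤ ∑ i, (D.valency i : ℤ) := by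
  classical
  set G := SimpleGraph.fromRel (fun i j : Fin r => 0 < D.M i j) with hG
  have hconn : G.Connected := D.connected
  have hcard := hconn.card_vert_le_card_edgeSet_add_one
  have hdeg := G.sum_degrees_eq_twice_card_edges
  rw [Nat.card_eq_fintype_card, Fintype.card_fin, Nat.card_eq_fintype_card,
    ← SimpleGraph.edgeFinset_card] at hcard
  have hle : ∑ i, G.degree i ≤ ∑ i, D.valency i := by
    refine Finset.sum_le_sum fun i _ => ?_
    rw [← SimpleGraph.card_neighborFinset_eq_degree, Finset.card_eq_sum_ones, valency]
    refine (Finset.sum_le_sum fun j hj => ?_).trans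
      (Finset.sum_le_sum_of_subset (Finset.subset_univ _))
    rw [SimpleGraph.mem_neighborFinset, hG, SimpleGraph.fromRel_adj, D.symm.apply i j, or_self]
      at hj
    rw [if_neg hj.1.symm]
    omega
  have : (2 * r : ℤ) - 2 ≤ ((∑ i, D.valency i : ℕ) : ℤ) := by omega
  exact_mod_cast this

theorem sum_rowDefect_pos (hr : 0 < r) : 0 < ∑ i, D.rowDefect i := by
  have h := D.negdef (fun _ => 1) fun h => one_ne_zero (congrFun h ⟨0, hr⟩)
  rw [form_eq_laplacian] at h
  simp only [one_pow, mul_one, sub_self] at h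
  norm_num at h
  exact_mod_cast h

/-- Vertices of valency at most one. -/
def leaves : Finset (Fin r) := Finset.univ.filter fun i => D.valency i ≤ 1

theorem card_leaves_le (hr : 0 < r) {B : ℤ} (hB : ∑ i, D.excess i ≤ B) :
    (D.leaves.card : ℤ) ≤ 2 * B + 4 := by
  let χ : Fin r → ℤ := fun i => if i ∈ D.leaves then 1 else 0
  have hχ : ∑ i, χ i = D.leaves.card := by simp [χ]
  have hχ0 : ∀ i, 0 ≤ χ i := fun i => by
    dsimp only [χ]
    split_ifs <;> norm_num
  have hχsq : ∀ i, χ i * χ i = χ i := fun i => by simp [χ]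
  have hneg : ∑ i, ∑ j, D.M i j * (2 - χ i) * (2 - χ j) < 0 := by
    have h := D.negdef (fun i => ((2 - χ i : ℤ) : ℝ)) fun h => by
      have := congrFun h ⟨0, hr⟩
      simp only [χ] at this
      split_ifs at this <;> norm_num at this
    rw [form_eq_sum] at h
    exact_mod_cast h
  have hexp : ∑ i, ∑ j, D.M i j * (2 - χ i) * (2 - χ j) =
      ∑ i, ∑ j, (4 * D.M i j - 2 * (D.M i j * χ i) - 2 * (D.M i j * χ j) +
        D.M i j * χ i * χ j) :=
    Finset.sum_congr rfl fun i _ => Finset.sum_congr rfl fun j _ => by ring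
  have hsymm : ∑ i, ∑ j, D.M i j * χ j = ∑ i, ∑ j, D.M i j * χ i := by
    rw [Finset.sum_comm]
    exact Finset.sum_congr rfl fun i _ => Finset.sum_congr rfl fun j _ => by rw [D.symm.apply]
  have hdiag : ∑ i, D.M i i * χ i ≤ ∑ i, ∑ j, D.M i j * χ i * χ j := by
    refine Finset.sum_le_sum fun i _ => ?_
    rw [← Finset.add_sum_erase _ _ (Finset.mem_univ i)]
    refine le_add_of_le_of_nonneg (le_of_eq ?_) (Finset.sum_nonneg fun j hj => ?_)
    · rw [mul_assoc, hχsq]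
    · exact mul_nonneg (mul_nonneg
        (D.offdiag_nonneg i j (Finset.ne_of_mem_erase hj).symm) (hχ0 i)) (hχ0 j)
  have hrow : ∑ i, ∑ j, (4 * D.M i j - 2 * (D.M i j * χ i) - 2 * (D.M i j * χ i)) =
      ∑ i, -4 * (D.rowDefect i * (1 - χ i)) := by
    refine Finset.sum_congr rfl fun i _ => ?_
    rw [Finset.sum_sub_distrib, Finset.sum_sub_distrib, ← Finset.mul_sum, ← Finset.mul_sum,
      ← Finset.sum_mul, rowDefect]
    ring
  have hpoint : ∑ i, (4 * (D.rowDefect i * (1 - χ i)) - D.M i i * χ i) ≤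
      ∑ i, (4 * D.excess i + (8 - 4 * (D.valency i : ℤ)) - 2 * χ i) := by
    refine Finset.sum_le_sum fun i _ => ?_
    have h1 := D.diag_add_two_le_excess i
    have h2 := D.excess_nonneg i
    rw [rowDefect_eq]
    simp only [χ, leaves, Finset.mem_filter, Finset.mem_univ, true_and]
    split_ifs with h <;> omega
  have htree := D.two_mul_card_sub_le_sum_valency
  simp only [Finset.sum_add_distrib, Finset.sum_sub_distrib, ← Finset.mul_sum, hχ, hsymm,
    Finset.sum_const, Finset.card_univ, Fintype.card_fin, nsmul_eq_mul] at hexp hrow hpoint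
  linarith

theorem sum_abs_valency_sub_two_le (hr : 0 < r) {B : ℤ} (hB : ∑ i, D.excess i ≤ B) :
    ∑ i, |(D.valency i : ℤ) - 2| ≤ 9 * B + 16 := by
  have hL := D.card_leaves_le hr hB
  have hpos := D.sum_rowDefect_pos hr
  have hsum : ∑ i, ((D.valency i : ℤ) - 2) ≤ ∑ i, D.excess i - ∑ i, D.rowDefect i := by
    rw [← Finset.sum_sub_distrib]
    refine Finset.sum_le_sum fun i _ => ?_
    have := D.diag_add_two_le_excess i
    rw [rowDefect_eq]
    linarith
  have habs : ∑ i, |(D.valency i : ℤ) - 2| ≤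
      ∑ i, (((D.valency i : ℤ) - 2) + 4 * if i ∈ D.leaves then 1 else 0) := by
    refine Finset.sum_le_sum fun i _ => ?_
    simp only [leaves, Finset.mem_filter, Finset.mem_univ, true_and]
    split_ifs with h
    · rw [abs_of_nonpos (by omega)]
      omega
    · rw [abs_of_nonneg (by omega)]
      omega
  rw [Finset.sum_add_distrib, ← Finset.mul_sum] at habs
  simp only [Finset.sum_ite_mem, Finset.univ_inter, Finset.sum_const, nsmul_eq_mul, mul_one]
    at habs
  linarith

end ResolutionDatum

theorem sum_map_finset_sum {ι α β : Type*} [AddCommMonoid β] (T : Finset ι) (F : ι → Multiset α)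
    (g : α → β) : ((∑ i ∈ T, F i).map g).sum = ∑ i ∈ T, ((F i).map g).sum :=
  map_sum (Multiset.sumAddMonoidHom.comp (Multiset.mapAddMonoidHom g)) F T

theorem sum_sum_eq_two_mul_sum_lt {r : ℕ} {g : Fin r → Fin r → ℝ} (hsymm : ∀ i j, g i j = g j i)
    (hdiag : ∀ i, g i i = 0) :
    ∑ i, ∑ j, g i j = 2 * ∑ i, ∑ j, if i < j then g i j else 0 := by
  have hswap : ∑ i, ∑ j, (if i < j then g i j else 0) =
      ∑ i, ∑ j, if j < i then g i j else 0 := by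
    rw [Finset.sum_comm]
    simp only [hsymm]
  rw [two_mul]
  nth_rewrite 2 [hswap]
  simp only [← Finset.sum_add_distrib]
  refine Finset.sum_congr rfl fun i _ => Finset.sum_congr rfl fun j _ => ?_
  rcases lt_trichotomy i j with h | rfl | h
  · simp [h, h.not_gt]
  · simp [hdiag]
  · simp [h, h.not_gt]

namespace ResolutionDatum

variable {r : ℕ} (D : ResolutionDatum r)

/-- The edges of the dual graph, with multiplicity, each of length one. -/
def unitEdges : Multiset (Fin r × Fin r × ℕ) :=
  ∑ i, ∑ j, Multiset.replicate (if i < j then (D.M i j).toNat else 0) (i, j, 1)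

theorem edgeEnergy_unitEdges (x : Fin r → ℝ) :
    edgeEnergy D.unitEdges x = (∑ i, ∑ j, (D.M i j : ℝ) * (x i - x j) ^ 2) / 2 := by
  rw [sum_sum_eq_two_mul_sum_lt (fun i j => by rw [D.symm.apply]; ring) (fun i => by simp),
    mul_div_cancel_left₀ _ two_ne_zero, edgeEnergy, unitEdges]
  simp only [sum_map_finset_sum, Multiset.map_replicate, Multiset.sum_replicate]
  refine Finset.sum_congr rfl fun i _ => Finset.sum_congr rfl fun j _ => ?_
  split_ifs with h
  · have : (((D.M i j).toNat : ℤ) : ℝ) = D.M i j := by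
      rw [Int.toNat_of_nonneg (D.offdiag_nonneg i j h.ne)]
    rw [nsmul_eq_mul, ← this, Int.cast_natCast, Nat.cast_one, div_one]
  · simp

theorem edgeEnds_unitEdges (v : Fin r) : edgeEnds D.unitEdges v = D.valency v := by
  rw [edgeEnds, unitEdges]
  simp only [sum_map_finset_sum, Multiset.map_replicate, Multiset.sum_replicate, smul_eq_mul,
    mul_add, Finset.sum_add_distrib, mul_ite, mul_one, mul_zero, Finset.sum_ite_eq',
    Finset.mem_univ, if_true]
  rw [Finset.sum_comm]
  simp only [Finset.sum_ite_eq', Finset.mem_univ, if_true]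
  rw [← Finset.sum_add_distrib, valency]
  refine Finset.sum_congr rfl fun j _ => ?_
  rcases lt_trichotomy v j with h | rfl | h
  · simp [h, h.not_gt, h.ne']
  · simp
  · simp [h, h.not_gt, h.ne, D.symm.apply j v]

theorem isReduction_unitEdges :
    IsReduction D.excess D.rowDefect D.valency (D.negK2 : ℝ) Finset.univ D.unitEdges where
  mem e he := by
    simp only [unitEdges, Multiset.mem_sum, Finset.mem_univ, true_and, Multiset.mem_replicate]
      at he
    obtain ⟨i, j, -, rfl⟩ := he
    simp
  ends_eq v _ := D.edgeEnds_unitEdges v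
  greatest := by
    convert D.isGreatest_negK2 using 2
    funext x
    rw [objective, form_eq_laplacian, edgeEnergy_unitEdges, Finset.sum_sub_distrib]
    ring

/-- Bounded data describing all but the edge lengths of a suppressed dual graph. -/
abbrev Shape (N : ℕ) : Type :=
  Σ k m : Fin (N + 1), (Fin k → Set.Icc (-N : ℤ) N) × (Fin k → Set.Icc (-N : ℤ) N) ×
    (Fin m → Fin k × Fin k)

theorem exists_shape (hr : 0 < r) {B N : ℕ} (hB : ∑ i, D.excess i ≤ B)
    (hN : 29 * B + 48 ≤ N) :
    ∃ t : Shape N, (D.negK2 : ℝ) ∈ modelValues (fun i => (t.2.2.1 i : ℤ))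
      (fun i => (t.2.2.2.1 i : ℤ)) t.2.2.2.2 := by
  obtain ⟨S, E, hred, hspec⟩ := D.isReduction_unitEdges.exists_subset_special fun v hc hv => by
    rw [rowDefect_eq, D.diag_eq_of_excess_eq_zero hc, hv]
    norm_num
  have habs := D.sum_abs_valency_sub_two_le hr hB
  have hexc : ∀ i, D.excess i ≤ B := fun i =>
    (Finset.single_le_sum (fun j _ => D.excess_nonneg j) (Finset.mem_univ i)).trans hB
  have hval : ∀ i, |(D.valency i : ℤ) - 2| ≤ 9 * B + 16 := fun i =>
    (Finset.single_le_sum (f := fun j => |(D.valency j : ℤ) - 2|)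
      (fun j _ => abs_nonneg _) (Finset.mem_univ i)).trans habs
  have hexcS : ∑ i ∈ S, D.excess i ≤ B :=
    (Finset.sum_le_sum_of_subset_of_nonneg (Finset.subset_univ S)
      fun j _ _ => D.excess_nonneg j).trans hB
  have habsS : ∑ i ∈ S, |(D.valency i : ℤ) - 2| ≤ 9 * B + 16 :=
    (Finset.sum_le_sum_of_subset_of_nonneg (Finset.subset_univ S)
      fun j _ _ => abs_nonneg _).trans habs
  have hS : (S.card : ℤ) ≤ 10 * B + 16 := by
    have : (S.card : ℤ) ≤ ∑ i ∈ S, (D.excess i + |(D.valency i : ℤ) - 2|) := by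
      rw [Finset.card_eq_sum_ones, Nat.cast_sum]
      refine Finset.sum_le_sum fun i hi => ?_
      have h0 := D.excess_nonneg i
      have h1 := abs_nonneg ((D.valency i : ℤ) - 2)
      rcases hspec i hi with h | h
      · push_cast
        omega
      · have : 0 < |(D.valency i : ℤ) - 2| := abs_pos.2 (by omega)
        push_cast
        omega
    rw [Finset.sum_add_distrib] at this
    linarith
  have hE : 2 * (E.card : ℤ) ≤ 29 * B + 48 := by
    have h2 := sum_edgeEnds fun e he => ⟨(hred.mem e he).1, (hred.mem e he).2.1⟩
    rw [Finset.sum_congr rfl hred.ends_eq] at h2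
    have h3 : ∑ i ∈ S, (D.valency i : ℤ) ≤ ∑ i ∈ S, (|(D.valency i : ℤ) - 2| + 2) :=
      Finset.sum_le_sum fun i _ => by linarith [le_abs_self ((D.valency i : ℤ) - 2)]
    rw [Finset.sum_add_distrib, Finset.sum_const, nsmul_eq_mul] at h3
    have h4 : ∑ i ∈ S, (D.valency i : ℤ) = 2 * E.card := by exact_mod_cast h2
    linarith
  obtain ⟨v, ends, hs⟩ := hred.exists_mem_modelValues
  refine ⟨⟨⟨S.card, by omega⟩, ⟨E.card, by omega⟩,
    fun i => ⟨D.excess (v i), ?_⟩, fun i => ⟨D.rowDefect (v i), ?_⟩, ends⟩, hs⟩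
  · have := D.excess_nonneg (v i)
    have := hexc (v i)
    constructor <;> omega
  · have h1 := abs_le.1 (hval (v i))
    have h2 := D.diag_add_two_le_excess (v i)
    have h3 := D.diag_neg (v i)
    have h4 := hexc (v i)
    rw [rowDefect_eq]
    constructor <;> omega

end ResolutionDatum

theorem isPWO_negK2Set_inter_Iic (C : ℝ) : (negK2Set ∩ Set.Iic C).IsPWO := by
  obtain ⟨B, hB⟩ := exists_nat_ge (3 * C)
  let N := 29 * B + 48
  have := Fintype.ofFinite (ResolutionDatum.Shape N)
  refine Set.IsPWO.mono ((Finset.isPWO_bUnion (Finset.univ : Finset (ResolutionDatum.Shape N))).2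
    fun t _ => isPWO_modelValues (fun i => (t.2.2.1 i : ℤ)) (fun i => (t.2.2.2.1 i : ℤ))
      t.2.2.2.2) ?_
  rintro _ ⟨⟨r, hr, D, rfl⟩, hC⟩
  have hle : ∑ i, D.excess i ≤ B := by
    have h := D.sum_excess_le
    have hC' : (D.negK2 : ℝ) ≤ C := hC
    have : ((∑ i, D.excess i : ℤ) : ℝ) ≤ ((B : ℤ) : ℝ) := by
      push_cast at h ⊢
      linarith
    exact_mod_cast this
  obtain ⟨t, ht⟩ := D.exists_shape hr hle (le_refl N)
  exact Set.mem_biUnion (Finset.mem_univ t) ht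

/-- **Theorem 1.12 (D.C.C.).** The set of values `-K²` of normal surface singularities has no
accumulation points from above; equivalently, it contains no strictly decreasing sequence. -/
theorem negK2Set_no_accumulation_from_above :
    (∀ α : ℝ, ∃ ε : ℝ, 0 < ε ∧ ∀ s ∈ negK2Set, ¬(α < s ∧ s < α + ε)) ∧
    ¬ ∃ f : ℕ → ℝ, (∀ n : ℕ, f n ∈ negK2Set) ∧ StrictAnti f := by
  refine ⟨fun α => ?_, ?_⟩
  · by_cases hne : (negK2Set ∩ Set.Iic (α + 1) ∩ Set.Ioi α).Nonempty
    · obtain ⟨m, hm⟩ := ((isPWO_negK2Set_inter_Iic (α + 1)).mono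
        Set.inter_subset_left).exists_minimal hne
      have hαm : α < m := hm.prop.2
      refine ⟨min 1 (m - α), lt_min one_pos (sub_pos.2 hαm), fun s hs ⟨h1, h2⟩ => ?_⟩
      have hs1 : s < α + 1 := h2.trans_le (by gcongr; exact min_le_left _ _)
      have hs2 : s < m := h2.trans_le (by linarith [min_le_right 1 (m - α)])
      exact hs2.not_ge (hm.le_of_le ⟨⟨hs, hs1.le⟩, h1⟩ hs2.le)
    · refine ⟨1, one_pos, fun s hs ⟨h1, h2⟩ => hne ⟨s, ⟨hs, h2.le⟩, h1⟩⟩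
  · rintro ⟨f, hf, hanti⟩
    obtain ⟨g, hg⟩ := (isPWO_negK2Set_inter_Iic (f 0)).exists_monotone_subseq
      fun n => ⟨hf n, hanti.antitone n.zero_le⟩
    exact (hanti (g.strictMono zero_lt_one)).not_ge (hg zero_le_one)
end

section
/- For all positive integers r and k with r ≥ k - 1, the rational number r²/k is an accumulation point of S, i.e., for every ε > 0 there exists s ∈ S with s ≠ r²/k and |s - r²/k| < ε. -/
open Matrix

/-- The negative of the Cartan matrix of type `A_N`, with a further `-t` at the diagonal
entry `a`. -/
def chainMatrix (N a t : ℕ) : Matrix (Fin N) (Fin N) ℤ := fun i j =>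
  (if (j : ℕ) = i then -2 else 0) + (if (j : ℕ) = i + 1 then 1 else 0) +
    (if (j : ℕ) + 1 = i then 1 else 0) +
    (if (j : ℕ) = i then (if (i : ℕ) = a then -(t : ℤ) else 0) else 0)

theorem chainMatrix_mulVec {R : Type*} [CommRing R] (N a t : ℕ) (f : ℕ → R) (h0 : f 0 = 0)
    (hN : f (N + 1) = 0) (i : Fin N) :
    (((chainMatrix N a t).map (Int.cast : ℤ → R)) *ᵥ (fun j : Fin N => f (j + 1))) i =
      f i + f (i + 2) - 2 * f (i + 1) - (if (i : ℕ) = a then (t : R) * f (i + 1) else 0) := by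
  obtain ⟨i, hi⟩ := i
  simp only [mulVec, dotProduct, Matrix.map_apply, chainMatrix]
  push_cast
  rw [Fin.sum_univ_eq_sum_range (fun j : ℕ => ((if j = i then (-2 : R) else 0) +
    (if j = i + 1 then 1 else 0) + (if j + 1 = i then 1 else 0) +
    (if j = i then (if i = a then -(t : R) else 0) else 0)) * f (j + 1)) N]
  simp only [add_mul, ite_mul, zero_mul, one_mul, Finset.sum_add_distrib, Finset.sum_ite_eq',
    Finset.mem_range, hi, if_true]
  have hprev : (∑ j ∈ Finset.range N, if j + 1 = i then f (j + 1) else 0) = f i := by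
    cases i with
    | zero => simp [h0]
    | succ m =>
      simp only [Nat.add_right_cancel_iff, Finset.sum_ite_eq', Finset.mem_range]
      rw [if_pos (by omega)]
  have hnext : (if i + 1 < N then f (i + 1 + 1) else 0) = f (i + 2) := by
    split_ifs with h
    · rfl
    · rw [show i + 2 = N + 1 by omega, hN]
  rw [hprev, hnext]
  split_ifs <;> ring

theorem sum_mul_second_difference {R : Type*} [CommRing R] (f : ℕ → R) (h0 : f 0 = 0) (N : ℕ) :
    ∑ i ∈ Finset.range N, f (i + 1) * (f i + f (i + 2) - 2 * f (i + 1)) =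
      f (N + 1) * (f (N + 1) - f N) - ∑ i ∈ Finset.range (N + 1), (f (i + 1) - f i) ^ 2 := by
  induction N with
  | zero => simp [h0]; ring
  | succ N ih =>
    rw [Finset.sum_range_succ, ih, Finset.sum_range_succ _ (N + 1)]
    ring

theorem chainMatrix_negDef (N a t : ℕ) (x : Fin N → ℝ) (hx : x ≠ 0) :
    x ⬝ᵥ (((chainMatrix N a t).map (Int.cast : ℤ → ℝ)) *ᵥ x) < 0 := by
  obtain ⟨f, h0, hN, rfl⟩ : ∃ f : ℕ → ℝ, f 0 = 0 ∧ f (N + 1) = 0 ∧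
      x = fun j : Fin N => f (j + 1) := by
    refine ⟨fun n => if h : 1 ≤ n ∧ n - 1 < N then x ⟨n - 1, h.2⟩ else 0, ?_, ?_, ?_⟩
    · simp
    · simp
    · ext j
      simp
  have hform : (fun j : Fin N => f (j + 1)) ⬝ᵥ
      (((chainMatrix N a t).map (Int.cast : ℤ → ℝ)) *ᵥ (fun j : Fin N => f (j + 1))) =
      -(∑ i ∈ Finset.range (N + 1), (f (i + 1) - f i) ^ 2) -
        ∑ i ∈ Finset.range N, (if i = a then (t : ℝ) * f (i + 1) ^ 2 else 0) := by
    have hsum := sum_mul_second_difference f h0 N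
    rw [hN, zero_mul, zero_sub] at hsum
    rw [← hsum, ← Finset.sum_sub_distrib, dotProduct, ← Fin.sum_univ_eq_sum_range]
    refine Finset.sum_congr rfl fun i _ => ?_
    rw [chainMatrix_mulVec N a t f h0 hN]
    split_ifs <;> ring
  rw [hform]
  have hnonneg : 0 ≤ ∑ i ∈ Finset.range N, (if i = a then (t : ℝ) * f (i + 1) ^ 2 else 0) :=
    Finset.sum_nonneg fun i _ => by split_ifs <;> positivity
  have hsq : 0 ≤ ∑ i ∈ Finset.range (N + 1), (f (i + 1) - f i) ^ 2 :=
    Finset.sum_nonneg fun i _ => sq_nonneg _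
  rcases hsq.lt_or_eq with hpos | hzero
  · linarith
  · rw [eq_comm, Finset.sum_eq_zero_iff_of_nonneg fun i _ => sq_nonneg _] at hzero
    have hf : ∀ n ≤ N + 1, f n = 0 := by
      intro n
      induction n with
      | zero => exact fun _ => h0
      | succ n ih =>
        intro hn
        have hstep := pow_eq_zero_iff (two_ne_zero) |>.mp (hzero n (Finset.mem_range.mpr hn))
        rw [ih (by omega), sub_zero] at hstep
        exact hstep
    exact absurd (funext fun j : Fin N => hf (j + 1) (by omega)) hx

theorem chainMatrix_connected (N a t : ℕ) (hN : 0 < N) :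
    (SimpleGraph.fromRel (fun i j : Fin N => 0 < chainMatrix N a t i j)).Connected := by
  have hreach : ∀ n (h : n < N), (SimpleGraph.fromRel
      (fun i j : Fin N => 0 < chainMatrix N a t i j)).Reachable ⟨0, hN⟩ ⟨n, h⟩ := by
    intro n
    induction n with
    | zero => exact fun _ => SimpleGraph.Reachable.refl _
    | succ n ih =>
      intro h
      refine (ih (by omega)).trans (SimpleGraph.Adj.reachable ?_)
      rw [SimpleGraph.fromRel_adj]
      refine ⟨by simp, Or.inl ?_⟩
      simp [chainMatrix, show ¬ n + 1 + 1 = n by omega]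
  have : Nonempty (Fin N) := ⟨⟨0, hN⟩⟩
  exact ⟨fun u v => (hreach u u.2).symm.trans (hreach v v.2)⟩

/-- A chain of `N` curves, all rational of self-intersection `-2`, except that the one at
position `a` has genus `g` and self-intersection `-2 - t`. -/
def chainDatum (N a t g : ℕ) (hN : 0 < N) : ResolutionDatum N where
  M := chainMatrix N a t
  p := fun i => if (i : ℕ) = a then g else 0
  symm := by
    ext i j
    simp only [Matrix.transpose_apply, chainMatrix]
    split_ifs <;> omega
  negdef := chainMatrix_negDef N a t
  offdiag_nonneg := by
    intro i j hij
    have hne : (j : ℕ) ≠ i := fun h => hij (Fin.ext h.symm)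
    simp only [chainMatrix, if_neg hne]
    split_ifs <;> omega
  diag_le_neg_two := by
    intro i _
    simp only [chainMatrix]
    split_ifs <;> omega
  connected := chainMatrix_connected N a t hN

theorem chainDatum_c (N a t g : ℕ) (hN : 0 < N) (i : Fin N) :
    (chainDatum N a t g hN).c i = if (i : ℕ) = a then (t : ℚ) + 2 * g else 0 := by
  simp only [ResolutionDatum.c, chainDatum, chainMatrix]
  split_ifs <;> first | omega | (push_cast; ring)

theorem ResolutionDatum.isUnit_det_s11 {r : ℕ} (D : ResolutionDatum r) :
    IsUnit (D.M.map (Int.cast : ℤ → ℚ)).det := by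
  have hdet : (D.M.map (Int.cast : ℤ → ℝ)).det ≠ 0 := by
    intro h
    obtain ⟨v, hv, hv0⟩ := Matrix.exists_mulVec_eq_zero_iff.mpr h
    have := D.negdef v hv
    rw [hv0, dotProduct_zero] at this
    exact lt_irrefl _ this
  have hR : (D.M.map (Int.cast : ℤ → ℝ)).det = (D.M.det : ℝ) :=
    ((Int.castRingHom ℝ).map_det D.M).symm
  have hQ : (D.M.map (Int.cast : ℤ → ℚ)).det = (D.M.det : ℚ) :=
    ((Int.castRingHom ℚ).map_det D.M).symm
  rw [hR] at hdet
  rw [hQ, isUnit_iff_ne_zero]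
  exact_mod_cast hdet

theorem ResolutionDatum.negK2_eq_of_mulVec_eq {r : ℕ} (D : ResolutionDatum r) (y : Fin r → ℚ)
    (hy : D.M.map (Int.cast : ℤ → ℚ) *ᵥ y = D.c) : D.negK2 = -(D.c ⬝ᵥ y) := by
  rw [ResolutionDatum.negK2]
  conv_lhs => rw [← hy]
  rw [mulVec_mulVec, Matrix.nonsing_inv_mul _ D.isUnit_det_s11, one_mulVec, hy]

theorem chainDatum_negK2 (N a t g : ℕ) (ha : a < N) :
    (chainDatum N a t g (by omega)).negK2 =
      ((t : ℚ) + 2 * g) ^ 2 / (t + (N + 1) / ((a + 1) * (N - a))) := by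
  have hNa : (0 : ℚ) < N - a := sub_pos.mpr (by exact_mod_cast ha)
  have hd : (0 : ℚ) < N + 1 + t * ((a + 1) * (N - a)) := by positivity
  set f : ℕ → ℚ := fun n => -(((t : ℚ) + 2 * g) / (N + 1 + t * ((a + 1) * (N - a)))) *
    (if n ≤ a + 1 then (n : ℚ) * (N - a) else (a + 1) * (N + 1 - n)) with hf
  have h0 : f 0 = 0 := by simp [hf]
  have hN : f (N + 1) = 0 := by
    simp [hf, show ¬ N ≤ a by omega]
  rw [ResolutionDatum.negK2_eq_of_mulVec_eq _ (fun j : Fin N => f (j + 1))]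
  · rw [dotProduct, Finset.sum_eq_single (⟨a, ha⟩ : Fin N)]
    · rw [chainDatum_c, if_pos rfl]
      simp only [hf, le_refl, if_true]
      push_cast
      field_simp
      ring
    · intro i _ hi
      rw [chainDatum_c, if_neg fun h => hi (Fin.ext h), zero_mul]
    · simp
  · ext i
    rw [chainDatum_c]
    change (((chainMatrix N a t).map (Int.cast : ℤ → ℚ)) *ᵥ _) i = _
    rw [chainMatrix_mulVec N a t f h0 hN]
    simp only [hf]
    rcases lt_trichotomy (i : ℕ) a with h | h | h
    · rw [if_pos (by omega), if_pos (by omega), if_pos (by omega), if_neg (by omega),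
        if_neg (by omega)]
      push_cast
      ring
    · rw [if_pos (by omega), if_neg (by omega), if_pos (by omega), if_pos h, if_pos h, h]
      push_cast
      field_simp
      ring
    · have hprev : (if (i : ℕ) ≤ a + 1 then ((i : ℕ) : ℚ) * (N - a)
          else (a + 1) * (N + 1 - (i : ℕ))) = (a + 1) * (N + 1 - (i : ℕ)) := by
        split_ifs with hi
        · rw [show (i : ℕ) = a + 1 by omega]
          push_cast
          ring
        · rfl
      rw [hprev, if_neg (by omega), if_neg (by omega), if_neg (by omega), if_neg (by omega)]
      push_cast
      ring

theorem chain_mem_negK2Set (N a t g : ℕ) (ha : a < N) :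
    ((t : ℝ) + 2 * g) ^ 2 / (t + (N + 1) / ((a + 1) * (N - a))) ∈ negK2Set := by
  refine ⟨N, by omega, chainDatum N a t g (by omega), ?_⟩
  rw [chainDatum_negK2 N a t g ha]
  push_cast
  rfl

theorem exists_mem_near_sq_div {S : Set ℝ} {r k b : ℝ} (hr : 0 < r) (hk : 0 < k) (hb : 0 < b)
    (h : ∀ n : ℕ, r ^ 2 / (k + b / (n + 1)) ∈ S) (ε : ℝ) (hε : 0 < ε) :
    ∃ s ∈ S, s ≠ r ^ 2 / k ∧ |s - r ^ 2 / k| < ε := by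
  have hlim : Filter.Tendsto (fun n : ℕ => r ^ 2 / (k + b / ((n : ℝ) + 1))) Filter.atTop
      (nhds (r ^ 2 / k)) := by
    have hzero : Filter.Tendsto (fun n : ℕ => b / ((n : ℝ) + 1)) Filter.atTop (nhds 0) :=
      tendsto_const_nhds.div_atTop
        (Filter.tendsto_atTop_add_const_right _ _ tendsto_natCast_atTop_atTop)
    have hden := hzero.const_add k
    rw [add_zero] at hden
    exact tendsto_const_nhds.div hden hk.ne'
  obtain ⟨n, hn⟩ := (Metric.tendsto_nhds.mp hlim ε hε).exists
  refine ⟨_, h n, ne_of_lt ?_, by simpa [Real.dist_eq] using hn⟩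
  have hpos : 0 < b / ((n : ℝ) + 1) := by positivity
  exact div_lt_div_of_pos_left (by positivity) hk (by linarith)

/-- **Proposition 2.5.** For positive integers `r ≥ k - 1`, the rational number `r²/k` is an
accumulation point of the set of values `-K²`. -/
theorem negK2Set_accumulation_r_sq_div_k (r k : ℕ) (hr : 0 < r) (hk : 0 < k)
    (hrk : k - 1 ≤ r) :
    ∀ ε : ℝ, 0 < ε →
      ∃ s ∈ negK2Set, s ≠ (r : ℝ) ^ 2 / (k : ℝ) ∧ |s - (r : ℝ) ^ 2 / (k : ℝ)| < ε := by
  have hr' : (0 : ℝ) < r := by exact_mod_cast hr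
  have hk' : (0 : ℝ) < k := by exact_mod_cast hk
  rcases Nat.even_or_odd (r + k) with hpar | hpar
  · obtain ⟨g, rfl⟩ : ∃ g, r = k + 2 * g := ⟨(r - k) / 2, by grind⟩
    refine exists_mem_near_sq_div hr' hk' two_pos fun n => ?_
    convert chain_mem_negK2Set (2 * n + 1) n k g (by omega) using 2
    · push_cast
      ring
    · have hn : ((2 * n + 1 : ℕ) : ℝ) - n = n + 1 := by push_cast; ring
      rw [hn]
      push_cast
      field_simp
      ring
  · obtain ⟨t, rfl⟩ : ∃ t, k = t + 1 := ⟨k - 1, by omega⟩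
    obtain ⟨g, rfl⟩ : ∃ g, r = t + 2 * g := ⟨(r - t) / 2, by grind⟩
    refine exists_mem_near_sq_div hr' hk' one_pos fun n => ?_
    convert chain_mem_negK2Set (n + 1) 0 t g (by omega) using 2
    · push_cast
      ring
    · push_cast
      field_simp
      ring
end
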